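/- arXiv:0802.2668 — 3 statements merged into one kernel-verified Lean document; each statement's English description precedes it below -/
import Mathlib

section
/- Let k ≥ 3 be odd, let C1 = x1–…–xk–x1 and C2 = y1–…–yk–y1 be two disjoint cycles of length k, and let G be the simple graph consisting of C1 and C2 together with the edges x_i y_i for i = 1, …, k. Let S assign to each vertex y_i a set of exactly 3 integers. Then at most one proper coloring of C1 fails to extend to G: if c and c' are proper colorings of C1 (functions into ℤ with cyclically consecutive vertices receiving distinct values) such that neither c nor c' can be completed to a coloring of all of G in which each y_i receives a color from S(y_i) and every pair of adjacent vertices of G receives distinct colors, then c = c'. -/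
theorem cycle_greedy (k : ℕ) (hk : 3 ≤ k) (L : ZMod k → Finset ℤ) (hL : ∀ i, 2 ≤ (L i).card)
    (i : ZMod k) (a : ℤ) (ha : a ∈ L (i + 1)) (h : 2 ≤ ((L i).erase a).card) :
    ∃ d : ZMod k → ℤ, (∀ j, d j ∈ L j) ∧ ∀ j, d j ≠ d (j + 1) := by
  haveI : NeZero k := ⟨by omega⟩
  classical
  let M : ZMod k → Finset ℤ := fun j => if j = i then (L i).erase a else L j
  have hM : ∀ j x, ∃ y ∈ M j, y ≠ x := by
    intro j x
    apply Finset.exists_mem_ne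
    have := hL j
    by_cases hj : j = i
    · simp only [M, if_pos hj]; omega
    · simp only [M, if_neg hj]; omega
  have hML : ∀ j, M j ⊆ L j := by
    intro j
    by_cases hj : j = i
    · simp only [M, if_pos hj]; subst hj; exact Finset.erase_subset _ _
    · simp only [M, if_neg hj]; exact Finset.Subset.refl _
  choose g hg hg' using hM
  let f : ℕ → ℤ := fun n => Nat.rec a (fun n x => g (i + 1 + ((n + 1 : ℕ) : ZMod k)) x) n
  have f0 : f 0 = a := rfl
  have fs : ∀ n, f (n + 1) = g (i + 1 + ((n + 1 : ℕ) : ZMod k)) (f n) := fun n => rfl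
  have hv : ∀ j : ZMod k, i + 1 + (((j - (i + 1)).val : ℕ) : ZMod k) = j := by
    intro j
    rw [ZMod.natCast_zmod_val]; ring
  refine ⟨fun j => f (j - (i + 1)).val, ?_, ?_⟩
  · intro j
    show f (j - (i + 1)).val ∈ L j
    have hj := hv j
    rcases hn : (j - (i + 1)).val with _ | n
    · rw [hn] at hj
      rw [f0, ← hj]; simpa using ha
    · rw [hn] at hj
      rw [fs, hj]
      exact hML _ (hg _ _)
  · intro j
    show f (j - (i + 1)).val ≠ f (j + 1 - (i + 1)).val
    have e : j + 1 - (i + 1) = (j - (i + 1)) + 1 := by ring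
    by_cases hj : j = i
    · subst hj
      have e0 : (j + 1 - (j + 1) : ZMod k).val = 0 := by simp
      rw [e0, f0]
      have hj := hv j
      rcases hn : (j - (j + 1)).val with _ | n
      · exfalso
        rw [ZMod.val_eq_zero] at hn
        have h1 : (1 : ZMod k) = 0 := by
          have : (1 : ZMod k) = -(j - (j + 1)) := by ring
          rw [this, hn, neg_zero]
        haveI : Fact (1 < k) := ⟨by omega⟩
        exact one_ne_zero h1
      · rw [hn] at hj
        rw [fs, hj]
        have := hg j (f n)
        simp only [M, if_pos] at this
        exact Finset.ne_of_mem_erase this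
    · have hlt : (j - (i + 1)).val + 1 < k := by
        have h1 := ZMod.val_lt (j - (i + 1))
        by_contra h2
        have h3 : (j - (i + 1)).val + 1 = k := by omega
        apply hj
        have h4 : (((j - (i + 1)).val + 1 : ℕ) : ZMod k) = 0 := by rw [h3]; simp
        rw [Nat.cast_add, ZMod.natCast_zmod_val] at h4
        push_cast at h4
        have : j - i = 0 := by rw [← h4]; ring
        exact sub_eq_zero.mp this
      have e1 : (j + 1 - (i + 1)).val = (j - (i + 1)).val + 1 := by
        rw [e]
        haveI : Fact (1 < k) := ⟨by omega⟩
        rw [ZMod.val_add_of_lt] <;> rw [ZMod.val_one]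
        exact hlt
      rw [e1, fs]
      exact (hg' _ _).symm

theorem cycle_lists_eq (k : ℕ) (hk : 3 ≤ k) (L : ZMod k → Finset ℤ) (hL : ∀ i, 2 ≤ (L i).card)
    (h : ¬ ∃ d : ZMod k → ℤ, (∀ j, d j ∈ L j) ∧ ∀ j, d j ≠ d (j + 1)) :
    ∃ T : Finset ℤ, T.card = 2 ∧ ∀ i, L i = T := by
  haveI : NeZero k := ⟨by omega⟩
  have key : ∀ i, ∀ a ∈ L (i + 1), a ∈ L i ∧ (L i).card = 2 := by
    intro i a ha
    have h1 : ¬ 2 ≤ ((L i).erase a).card := fun h2 => h (cycle_greedy k hk L hL i a ha h2)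
    have := hL i
    have h3 : a ∈ L i := by
      by_contra h4
      rw [Finset.erase_eq_of_notMem h4] at h1
      exact h1 this
    rw [Finset.card_erase_of_mem h3] at h1
    exact ⟨h3, by omega⟩
  have hcard : ∀ i, (L i).card = 2 := by
    intro i
    have h0 : 0 < (L (i + 1)).card := by have := hL (i + 1); omega
    obtain ⟨a, ha⟩ := Finset.card_pos.mp h0
    exact (key i a ha).2
  have hstep : ∀ i, L (i + 1) = L i := fun i =>
    Finset.eq_of_subset_of_card_le (fun a ha => (key i a ha).1) (by rw [hcard, hcard])
  have hn : ∀ n : ℕ, L (n : ZMod k) = L 0 := by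
    intro n
    induction n with
    | zero => simp
    | succ n ih => rw [Nat.cast_succ, hstep, ih]
  refine ⟨L 0, hcard 0, fun i => ?_⟩
  rw [← hn i.val, ZMod.natCast_zmod_val]

theorem bad_coloring_lists (k : ℕ) (hk : 3 ≤ k)
    (S : ZMod k → Finset ℤ) (hS : ∀ i, (S i).card = 3) (c : ZMod k → ℤ)
    (h1 : ¬ ∃ d : ZMod k → ℤ, (∀ i, d i ∈ S i) ∧
      (∀ i : ZMod k, d i ≠ d (i + 1)) ∧ ∀ i, c i ≠ d i) :
    ∃ T : Finset ℤ, T.card = 2 ∧ ∀ i, c i ∉ T ∧ S i = insert (c i) T := by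
  obtain ⟨T, hT, hE⟩ := cycle_lists_eq k hk (fun i => (S i).erase (c i))
    (fun i => by have := Finset.pred_card_le_card_erase (s := S i) (a := c i); have := hS i; omega)
    (by
      rintro ⟨d, hd, hd'⟩
      exact h1 ⟨d, fun i => Finset.mem_of_mem_erase (hd i), hd',
        fun i => (Finset.ne_of_mem_erase (hd i)).symm⟩)
  refine ⟨T, hT, fun i => ?_⟩
  have hE := hE i
  have hmem : c i ∈ S i := by
    by_contra h
    rw [Finset.erase_eq_of_notMem h] at hE
    have := hS i
    rw [hE] at this
    omega
  rw [← hE]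
  exact ⟨Finset.notMem_erase _ _, (Finset.insert_erase hmem).symm⟩

/-- Lemma 4.2: `C₁` and `C₂` are two disjoint odd cycles of length `k` (with vertices
indexed by `ZMod k`, vertex `i` adjacent to `i + 1`), joined by the matching edges
`xᵢyᵢ`.  If each vertex `yᵢ` of `C₂` carries a list `S i` of exactly 3 integers, then
at most one proper coloring of `C₁` fails to extend to the whole graph (a completion
is a coloring `d` of `C₂` from the lists, proper on `C₂`, with `d i ≠ c i` for the
matching edges). -/
theorem odd_cycle_prism_at_most_one_bad_coloring (k : ℕ) (hk : 3 ≤ k) (hodd : Odd k)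
    (S : ZMod k → Finset ℤ) (hS : ∀ i, (S i).card = 3)
    (c c' : ZMod k → ℤ)
    (hc : ∀ i : ZMod k, c i ≠ c (i + 1))
    (hc' : ∀ i : ZMod k, c' i ≠ c' (i + 1))
    (h1 : ¬ ∃ d : ZMod k → ℤ, (∀ i, d i ∈ S i) ∧
      (∀ i : ZMod k, d i ≠ d (i + 1)) ∧ ∀ i, c i ≠ d i)
    (h2 : ¬ ∃ d : ZMod k → ℤ, (∀ i, d i ∈ S i) ∧
      (∀ i : ZMod k, d i ≠ d (i + 1)) ∧ ∀ i, c' i ≠ d i) :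
    c = c' := by
  obtain ⟨T, hT, hcT⟩ := bad_coloring_lists k hk S hS c h1
  obtain ⟨T', hT', hcT'⟩ := bad_coloring_lists k hk S hS c' h2
  by_cases hTT : T = T'
  · subst hTT
    funext i
    have h : c i ∈ insert (c' i) T := by
      rw [← (hcT' i).2, (hcT i).2]; exact Finset.mem_insert_self _ _
    rcases Finset.mem_insert.mp h with h | h
    · exact h
    · exact absurd h (hcT i).1
  · exfalso
    -- pick a point of the second pair outside the first; it must be the value of `c` everywhere
    have hns : ¬ T' ⊆ T := fun hs => hTT (Finset.eq_of_subset_of_card_le hs (by omega)).symm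
    obtain ⟨x, hx, hxT⟩ := Finset.not_subset.mp hns
    have hcx : ∀ i, x = c i := by
      intro i
      have h : x ∈ insert (c i) T := by
        rw [← (hcT i).2, (hcT' i).2]; exact Finset.mem_insert_of_mem hx
      rcases Finset.mem_insert.mp h with h | h
      · exact h
      · exact absurd h hxT
    exact hc 0 ((hcx 0).symm.trans (hcx (0 + 1)))
end

section
/- Let G be a finite simple graph and f : V(G) → {2,3}. Let W be a finite simple graph with a distinguished vertex u0 such that W is 3-choosable but W is not g-choosable, where g(u0) = 2 and g(w) = 3 for all vertices w ≠ u0 of W. Let G' be the simple graph obtained from G by adding, for each vertex v of G with f(v) = 2, a new disjoint copy W_v of W together with the edge joining v to the vertex u0 of W_v. Then G' is 3-choosable if and only if G is f-choosable. -/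
/-- The graph `G'` obtained from `G` by adding, for each vertex `v` of `G` with
`f v = m`, a new disjoint copy of `W` together with the edge joining `v` to the
vertex `u0` of that copy. -/
def glueGraph {V U : Type} (G : SimpleGraph V) (f : V → ℕ) (m : ℕ)
    (W : SimpleGraph U) (u0 : U) :
    SimpleGraph (V ⊕ ({v : V // f v = m} × U)) :=
  SimpleGraph.fromRel (fun p q =>
    (∃ a b, G.Adj a b ∧ p = Sum.inl a ∧ q = Sum.inl b) ∨
    (∃ (v : {v : V // f v = m}) (w w' : U), W.Adj w w' ∧
      p = Sum.inr (v, w) ∧ q = Sum.inr (v, w')) ∨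
    (∃ v : {v : V // f v = m}, p = Sum.inl v.1 ∧ q = Sum.inr (v, u0)))

/-- The reduction in the proof of Theorem 1.10: if `W` is a 3-choice-critical gadget
(3-choosable, but not colorable from some lists of size 3 with a list of size 2 at
`u0`), then the graph `G'` obtained from `G` by attaching a copy of `W` at every
vertex `v` with `f v = 2` is 3-choosable iff `G` is `f`-choosable. -/
theorem glue_three_choosable_iff {V U : Type} [Fintype V] [Fintype U]
    (G : SimpleGraph V) (f : V → ℕ) (hf : ∀ v, f v = 2 ∨ f v = 3)
    (W : SimpleGraph U) (u0 : U)
    (hW3 : ∀ S : U → Finset ℤ, (∀ w, (S w).card = 3) →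
      ∃ c : U → ℤ, (∀ w, c w ∈ S w) ∧ ∀ p q, W.Adj p q → c p ≠ c q)
    (hWg : ¬ ∀ S : U → Finset ℤ,
      ((S u0).card = 2 ∧ ∀ w, w ≠ u0 → (S w).card = 3) →
      ∃ c : U → ℤ, (∀ w, c w ∈ S w) ∧ ∀ p q, W.Adj p q → c p ≠ c q) :
    (∀ S : (V ⊕ ({v : V // f v = 2} × U)) → Finset ℤ, (∀ z, (S z).card = 3) →
      ∃ c : (V ⊕ ({v : V // f v = 2} × U)) → ℤ, (∀ z, c z ∈ S z) ∧
        ∀ p q, (glueGraph G f 2 W u0).Adj p q → c p ≠ c q) ↔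
    (∀ S : V → Finset ℤ, (∀ v, (S v).card = f v) →
      ∃ c : V → ℤ, (∀ v, c v ∈ S v) ∧ ∀ p q, G.Adj p q → c p ≠ c q) := by
  classical
  constructor
  · intro H S hS
    push Not at hWg
    obtain ⟨L, ⟨hL0, hL⟩, hbad⟩ := hWg
    have hx : ∀ v : V, ∃ x : ℤ, x ∉ S v ∪ L u0 := fun v =>
      Infinite.exists_notMem_finset _
    choose x hx using hx
    have hxS : ∀ v, x v ∉ S v := fun v h => hx v (Finset.mem_union_left _ h)
    have hxL : ∀ v, x v ∉ L u0 := fun v h => hx v (Finset.mem_union_right _ h)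
    let T : (V ⊕ ({v : V // f v = 2} × U)) → Finset ℤ := fun z =>
      match z with
      | Sum.inl v => if f v = 2 then insert (x v) (S v) else S v
      | Sum.inr (v, w) => if w = u0 then insert (x v.1) (L u0) else L w
    have hT : ∀ z, (T z).card = 3 := by
      rintro (v | ⟨v, w⟩)
      · by_cases h : f v = 2
        · simp [T, h, Finset.card_insert_of_notMem (hxS v), hS v]
        · have h3 := (hf v).resolve_left h
          simp [T, h3, hS v]
      · by_cases h : w = u0
        · simp [T, h, Finset.card_insert_of_notMem (hxL v.1), hL0]
        · simp [T, h, hL w h]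
    obtain ⟨c, hc, hadj⟩ := H T hT
    refine ⟨fun v => c (Sum.inl v), fun v => ?_, fun p q hpq => ?_⟩
    · have hv := hc (Sum.inl v)
      by_cases h : f v = 2
      · have hu : c (Sum.inr (⟨v, h⟩, u0)) = x v := by
          by_contra hne
          obtain ⟨p, q, hpq, heq⟩ := hbad (fun w => c (Sum.inr (⟨v, h⟩, w))) (by
            intro w
            have hw := hc (Sum.inr (⟨v, h⟩, w))
            by_cases h0 : w = u0
            · subst h0
              simp only [T, if_true, Finset.mem_insert] at hw
              exact hw.resolve_left hne
            · simpa [T, h0] using hw)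
          refine hadj (Sum.inr (⟨v, h⟩, p)) (Sum.inr (⟨v, h⟩, q)) ?_ heq
          rw [glueGraph, SimpleGraph.fromRel_adj]
          refine ⟨?_, Or.inl (Or.inr (Or.inl ⟨⟨v, h⟩, p, q, hpq, rfl, rfl⟩))⟩
          simpa using hpq.ne
        have hne : c (Sum.inl v) ≠ c (Sum.inr (⟨v, h⟩, u0)) := by
          apply hadj
          rw [glueGraph, SimpleGraph.fromRel_adj]
          exact ⟨by simp, Or.inl (Or.inr (Or.inr ⟨⟨v, h⟩, rfl, rfl⟩))⟩
        simp only [T, h, if_true, Finset.mem_insert] at hv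
        exact hv.resolve_left (hu ▸ hne)
      · simpa [T, h] using hv
    · apply hadj
      rw [glueGraph, SimpleGraph.fromRel_adj]
      exact ⟨by simpa using hpq.ne, Or.inl (Or.inl ⟨p, q, hpq, rfl, rfl⟩)⟩
  · intro H S hS
    have hd : ∀ v : {v : V // f v = 2}, ∃ c : U → ℤ,
        (∀ w, c w ∈ S (Sum.inr (v, w))) ∧ ∀ p q, W.Adj p q → c p ≠ c q :=
      fun v => hW3 (fun w => S (Sum.inr (v, w))) (fun w => hS _)
    choose d hdS hdA using hd
    have hT : ∀ v : V, ∃ T : Finset ℤ, T ⊆ S (Sum.inl v) ∧ T.card = f v ∧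
        ∀ h : f v = 2, d ⟨v, h⟩ u0 ∉ T := by
      intro v
      by_cases h : f v = 2
      · have h1 : 2 ≤ ((S (Sum.inl v)).erase (d ⟨v, h⟩ u0)).card := by
          have := Finset.pred_card_le_card_erase (s := S (Sum.inl v)) (a := d ⟨v, h⟩ u0)
          rw [hS] at this
          exact this
        obtain ⟨T, hTs, hTc⟩ := Finset.exists_subset_card_eq h1
        exact ⟨T, hTs.trans (Finset.erase_subset _ _), hTc.trans h.symm,
          fun _ hm => Finset.notMem_erase _ _ (hTs hm)⟩
      · exact ⟨S (Sum.inl v), subset_rfl, (hS _).trans ((hf v).resolve_left h).symm,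
          fun h' => absurd h' h⟩
    choose T hTS hTc hTd using hT
    obtain ⟨c, hc, hcA⟩ := H T hTc
    have key : ∀ v : {v : V // f v = 2}, c v.1 ≠ d v u0 := fun v he =>
      hTd v.1 v.2 (he ▸ hc v.1)
    refine ⟨Sum.elim c (fun z => d z.1 z.2), ?_, ?_⟩
    · rintro (v | ⟨v, w⟩)
      · exact hTS v (hc v)
      · exact hdS v w
    · intro p q hpq
      rw [glueGraph, SimpleGraph.fromRel_adj] at hpq
      rcases hpq.2 with (⟨a, b, h, rfl, rfl⟩ | ⟨v, w, w', h, rfl, rfl⟩ | ⟨v, rfl, rfl⟩) |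
        (⟨a, b, h, rfl, rfl⟩ | ⟨v, w, w', h, rfl, rfl⟩ | ⟨v, rfl, rfl⟩)
      · exact hcA _ _ h
      · exact hdA v _ _ h
      · exact key v
      · exact (hcA _ _ h).symm
      · exact (hdA v _ _ h).symm
      · exact (key v).symm
end

section
/- Let G be a finite simple graph and f : V(G) → {3,4}. Let W be a finite simple graph with a distinguished vertex u0 such that W is 4-choosable but W is not g-choosable, where g(u0) = 3 and g(w) = 4 for all vertices w ≠ u0 of W. Let G' be the simple graph obtained from G by adding, for each vertex v of G with f(v) = 3, a new disjoint copy W_v of W together with the edge joining v to the vertex u0 of W_v. Then G' is 4-choosable if and only if G is f-choosable. -/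
/-- The reduction in the proof of Theorem 1.11: if `W` is a 4-choice-critical gadget
(4-choosable, but not colorable from some lists of size 4 with a list of size 3 at
`u0`), then the graph `G'` obtained from `G` by attaching a copy of `W` at every
vertex `v` with `f v = 3` is 4-choosable iff `G` is `f`-choosable. -/
theorem glue_four_choosable_iff {V U : Type} [Fintype V] [Fintype U]
    (G : SimpleGraph V) (f : V → ℕ) (hf : ∀ v, f v = 3 ∨ f v = 4)
    (W : SimpleGraph U) (u0 : U)
    (hW4 : ∀ S : U → Finset ℤ, (∀ w, (S w).card = 4) →
      ∃ c : U → ℤ, (∀ w, c w ∈ S w) ∧ ∀ p q, W.Adj p q → c p ≠ c q)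
    (hWg : ¬ ∀ S : U → Finset ℤ,
      ((S u0).card = 3 ∧ ∀ w, w ≠ u0 → (S w).card = 4) →
      ∃ c : U → ℤ, (∀ w, c w ∈ S w) ∧ ∀ p q, W.Adj p q → c p ≠ c q) :
    (∀ S : (V ⊕ ({v : V // f v = 3} × U)) → Finset ℤ, (∀ z, (S z).card = 4) →
      ∃ c : (V ⊕ ({v : V // f v = 3} × U)) → ℤ, (∀ z, c z ∈ S z) ∧
        ∀ p q, (glueGraph G f 3 W u0).Adj p q → c p ≠ c q) ↔
    (∀ S : V → Finset ℤ, (∀ v, (S v).card = f v) →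
      ∃ c : V → ℤ, (∀ v, c v ∈ S v) ∧ ∀ p q, G.Adj p q → c p ≠ c q) := by
  classical
  constructor
  · intro H S hS
    push Not at hWg
    obtain ⟨T, ⟨hT0, hT⟩, hbad⟩ := hWg
    obtain ⟨x, hx⟩ := Infinite.exists_notMem_finset
      (Finset.univ.biUnion S ∪ Finset.univ.biUnion T)
    simp only [Finset.mem_union, Finset.mem_biUnion, Finset.mem_univ, true_and, not_or,
      not_exists] at hx
    obtain ⟨hxS, hxT⟩ := hx
    obtain ⟨c, hc, hadj⟩ := H (fun z => match z with
      | Sum.inl v => if f v = 3 then insert x (S v) else S v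
      | Sum.inr (_, w) => if w = u0 then insert x (T w) else T w) (by
        rintro (v | ⟨v, w⟩)
        · by_cases h : f v = 3
          · simp [h, Finset.card_insert_of_notMem (hxS v), hS v]
          · have := hf v
            simp only [h, if_false]
            rw [hS v]; omega
        · by_cases h : w = u0
          · subst h
            simp [Finset.card_insert_of_notMem (hxT w), hT0]
          · simp [h, hT w h])
    refine ⟨fun v => c (Sum.inl v), ?_, ?_⟩
    · intro v
      have hv := hc (Sum.inl v)
      by_cases h : f v = 3
      · simp only [h, if_true, Finset.mem_insert] at hv
        rcases hv with hv | hv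
        · exfalso
          have hne : c (Sum.inl v) ≠ c (Sum.inr (⟨v, h⟩, u0)) := by
            apply hadj
            rw [glueGraph, SimpleGraph.fromRel_adj]
            exact ⟨by simp, Or.inl (Or.inr (Or.inr ⟨⟨v, h⟩, rfl, rfl⟩))⟩
          obtain ⟨p, q, hpq, he⟩ := hbad (fun w => c (Sum.inr (⟨v, h⟩, w))) (by
            intro w
            have hw := hc (Sum.inr (⟨v, h⟩, w))
            by_cases h0 : w = u0
            · subst h0
              simp only [if_true, Finset.mem_insert] at hw
              rcases hw with hw | hw
              · exact absurd (hv.trans hw.symm) hne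
              · exact hw
            · simpa only [h0, if_false] using hw)
          refine hadj (Sum.inr (⟨v, h⟩, p)) (Sum.inr (⟨v, h⟩, q)) ?_ he
          rw [glueGraph, SimpleGraph.fromRel_adj]
          exact ⟨by simpa using hpq.ne, Or.inl (Or.inr (Or.inl ⟨⟨v, h⟩, p, q, hpq, rfl, rfl⟩))⟩
        · exact hv
      · simpa only [h, if_false] using hv
    · intro p q hpq
      apply hadj
      rw [glueGraph, SimpleGraph.fromRel_adj]
      exact ⟨by simpa using hpq.ne, Or.inl (Or.inl ⟨p, q, hpq, rfl, rfl⟩)⟩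
  · intro H S hS
    choose d hd hdadj using fun v : {v : V // f v = 3} =>
      hW4 (fun w => S (Sum.inr (v, w))) (fun w => hS _)
    have key : ∀ v, ∃ T : Finset ℤ, T ⊆ S (Sum.inl v) ∧ T.card = f v ∧
        ∀ h : f v = 3, d ⟨v, h⟩ u0 ∉ T := by
      intro v
      rcases hf v with h | h
      · obtain ⟨T, hT, hc⟩ := Finset.exists_subset_card_eq
          (s := (S (Sum.inl v)).erase (d ⟨v, h⟩ u0)) (n := 3) (by
            have := Finset.pred_card_le_card_erase (s := S (Sum.inl v)) (a := d ⟨v, h⟩ u0)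
            rw [hS] at this
            exact this)
        exact ⟨T, hT.trans (Finset.erase_subset _ _), by rw [hc, h],
          fun _ hm => Finset.notMem_erase _ _ (hT hm)⟩
      · exact ⟨_, subset_rfl, by rw [hS, h], fun h3 => by omega⟩
    choose T hTS hTc hTd using key
    obtain ⟨c, hc, hadj⟩ := H T hTc
    have hrel : ∀ p q, ((∃ a b, G.Adj a b ∧ p = Sum.inl a ∧ q = Sum.inl b) ∨
        (∃ (v : {v : V // f v = 3}) (w w' : U), W.Adj w w' ∧
          p = Sum.inr (v, w) ∧ q = Sum.inr (v, w')) ∨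
        (∃ v : {v : V // f v = 3}, p = Sum.inl v.1 ∧ q = Sum.inr (v, u0))) →
        Sum.elim c (fun z : {v : V // f v = 3} × U => d z.1 z.2) p ≠
          Sum.elim c (fun z => d z.1 z.2) q := by
      rintro p q (⟨a, b, hab, rfl, rfl⟩ | ⟨v, w, w', hw, rfl, rfl⟩ | ⟨v, rfl, rfl⟩)
      · exact hadj a b hab
      · exact hdadj v w w' hw
      · intro he
        apply hTd v.1 v.2
        have := hc v.1
        simp only [Sum.elim_inl, Sum.elim_inr] at he
        rwa [he] at this
    refine ⟨Sum.elim c (fun z => d z.1 z.2), ?_, ?_⟩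
    · rintro (v | ⟨v, w⟩)
      · exact hTS v (hc v)
      · exact hd v w
    · intro p q hpq
      rw [glueGraph, SimpleGraph.fromRel_adj] at hpq
      rcases hpq.2 with h | h
      · exact hrel p q h
      · exact (hrel q p h).symm
end
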